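/- (Braid relations for the 5-dimensional Fibonacci representation of B₆, away from the middle strand.) Define 5×5 complex matrices σ₁ = exp(-4πI/5) • (exp(7πI/5) ⊕ (R₁ ⊗ 1₂)), σ₂ = exp(-4πI/5) • (exp(7πI/5) ⊕ (R₂ ⊗ 1₂)), σ₄ = exp(-4πI/5) • (exp(7πI/5) ⊕ (1₂ ⊗ R₂)), σ₅ = exp(-4πI/5) • (exp(7πI/5) ⊕ (1₂ ⊗ R₁)), where s ⊕ M denotes the 5×5 block-diagonal matrix with the scalar s in the (0,0) entry and the 4×4 matrix M occupying rows and columns 1–4. Then: σ₁σ₂σ₁ = σ₂σ₁σ₂, σ₄σ₅σ₄ = σ₅σ₄σ₅, and σᵢσⱼ = σⱼσᵢ for every i ∈ {1, 2} and j ∈ {4, 5}. -/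

import Mathlib

/-! Both `A ↦ kron A 1` and `A ↦ kron 1 A` are multiplicative with commuting images, and
`oplus` and scalar multiples respect products, so everything reduces to the braid relation
`R1 * R2 * R1 = R2 * R1 * R2` for `2 × 2` matrices. With `a = φ⁻¹`, `b = φ^(-1/2)` and
`w = exp (7πI/5)`, this follows from the three polynomial relations `a² + a = 1`, `b² = a` and
`w² + a w + 1 = 0`; the last one says `2 cos (7π/5) = -φ⁻¹`. -/

open Matrix Complex

/-- The golden ratio `φ = (1+√5)/2`. -/
noncomputable def phi : ℝ := (1 + Real.sqrt 5) / 2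

/-- The Fibonacci F-matrix `F = !![φ⁻¹, φ^(-1/2); φ^(-1/2), -φ⁻¹]`. -/
noncomputable def Fm : Matrix (Fin 2) (Fin 2) ℂ :=
  !![((phi⁻¹ : ℝ) : ℂ), ((phi ^ (-(1 : ℝ) / 2) : ℝ) : ℂ);
     ((phi ^ (-(1 : ℝ) / 2) : ℝ) : ℂ), -((phi⁻¹ : ℝ) : ℂ)]

/-- The Fibonacci braid matrix `R₁ = exp(-4πI/5) • !![1, 0; 0, exp(7πI/5)]`. -/
noncomputable def R1 : Matrix (Fin 2) (Fin 2) ℂ :=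
  Complex.exp (-4 * (Real.pi : ℂ) * Complex.I / 5) •
    !![1, 0; 0, Complex.exp (7 * (Real.pi : ℂ) * Complex.I / 5)]

/-- The Fibonacci braid matrix `R₂ = F * R₁ * F`. -/
noncomputable def R2 : Matrix (Fin 2) (Fin 2) ℂ := Fm * R1 * Fm

/-- Kronecker product of two `2×2` matrices, as a `4×4` matrix with basis ordered
`|00⟩, |01⟩, |10⟩, |11⟩` (the first factor acts on the first qubit). -/
noncomputable def kron (A B : Matrix (Fin 2) (Fin 2) ℂ) : Matrix (Fin 4) (Fin 4) ℂ :=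
  Matrix.of fun i j =>
    A ⟨i.val / 2, by omega⟩ ⟨j.val / 2, by omega⟩ *
    B ⟨i.val % 2, by omega⟩ ⟨j.val % 2, by omega⟩

/-- `s ⊕ M`: the `5×5` block-diagonal matrix with scalar `s` in the `(0,0)` entry and the
`4×4` matrix `M` occupying rows and columns `1–4`. -/
noncomputable def oplus (s : ℂ) (M : Matrix (Fin 4) (Fin 4) ℂ) : Matrix (Fin 5) (Fin 5) ℂ :=
  Matrix.reindex finSumFinEquiv finSumFinEquiv (Matrix.fromBlocks !![s] 0 0 M)

/-- `σ₁ = exp(-4πI/5) • (exp(7πI/5) ⊕ (R₁ ⊗ 1₂))`. -/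
noncomputable def σ1 : Matrix (Fin 5) (Fin 5) ℂ :=
  Complex.exp (-4 * (Real.pi : ℂ) * Complex.I / 5) •
    oplus (Complex.exp (7 * (Real.pi : ℂ) * Complex.I / 5)) (kron R1 1)

/-- `σ₂ = exp(-4πI/5) • (exp(7πI/5) ⊕ (R₂ ⊗ 1₂))`. -/
noncomputable def σ2 : Matrix (Fin 5) (Fin 5) ℂ :=
  Complex.exp (-4 * (Real.pi : ℂ) * Complex.I / 5) •
    oplus (Complex.exp (7 * (Real.pi : ℂ) * Complex.I / 5)) (kron R2 1)

/-- `σ₄ = exp(-4πI/5) • (exp(7πI/5) ⊕ (1₂ ⊗ R₂))`. -/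
noncomputable def σ4 : Matrix (Fin 5) (Fin 5) ℂ :=
  Complex.exp (-4 * (Real.pi : ℂ) * Complex.I / 5) •
    oplus (Complex.exp (7 * (Real.pi : ℂ) * Complex.I / 5)) (kron 1 R2)

/-- `σ₅ = exp(-4πI/5) • (exp(7πI/5) ⊕ (1₂ ⊗ R₁))`. -/
noncomputable def σ5 : Matrix (Fin 5) (Fin 5) ℂ :=
  Complex.exp (-4 * (Real.pi : ℂ) * Complex.I / 5) •
    oplus (Complex.exp (7 * (Real.pi : ℂ) * Complex.I / 5)) (kron 1 R1)

lemma phi_pos : 0 < phi := by unfold phi; positivity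

lemma phi_inv_eq : phi⁻¹ = (Real.sqrt 5 - 1) / 2 := by
  have h5 : Real.sqrt 5 ^ 2 = 5 := Real.sq_sqrt (by norm_num)
  refine inv_eq_of_mul_eq_one_right ?_
  unfold phi
  linear_combination h5 / 4

lemma phi_inv_sq : phi⁻¹ ^ 2 + phi⁻¹ = 1 := by
  have h5 : Real.sqrt 5 ^ 2 = 5 := Real.sq_sqrt (by norm_num)
  rw [phi_inv_eq]
  linear_combination h5 / 4

lemma phi_rpow_sq : (phi ^ (-(1 : ℝ) / 2)) ^ 2 = phi⁻¹ := by
  rw [← Real.rpow_natCast, ← Real.rpow_mul phi_pos.le, ← Real.rpow_neg_one]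
  norm_num

lemma two_cos_eq : 2 * Real.cos (7 * Real.pi / 5) = -phi⁻¹ := by
  have h5 : Real.sqrt 5 ^ 2 = 5 := Real.sq_sqrt (by norm_num)
  rw [show 7 * Real.pi / 5 = 2 * (Real.pi / 5) + Real.pi by ring, Real.cos_add_pi,
    Real.cos_two_mul, Real.cos_pi_div_five, phi_inv_eq]
  linear_combination -h5 / 4

/-- The minimal polynomial of `exp (7πI/5)` over `ℚ(√5)`. -/
lemma exp_quadratic :
    Complex.exp (7 * (Real.pi : ℂ) * Complex.I / 5) ^ 2
      + ((phi⁻¹ : ℝ) : ℂ) * Complex.exp (7 * (Real.pi : ℂ) * Complex.I / 5) + 1 = 0 := by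
  have hc : (2 : ℂ) * Complex.cos (7 * Real.pi / 5) = -((phi⁻¹ : ℝ) : ℂ) := by
    exact_mod_cast congrArg (fun x : ℝ => (x : ℂ)) two_cos_eq
  rw [Complex.two_cos,
    show (7 * (Real.pi : ℂ) / 5) * Complex.I = 7 * Real.pi * Complex.I / 5 by ring,
    show -(7 * (Real.pi : ℂ) / 5) * Complex.I = -(7 * Real.pi * Complex.I / 5) by ring] at hc
  have he : Complex.exp (7 * (Real.pi : ℂ) * Complex.I / 5)
      * Complex.exp (-(7 * (Real.pi : ℂ) * Complex.I / 5)) = 1 := by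
    rw [← Complex.exp_add, add_neg_cancel, Complex.exp_zero]
  linear_combination Complex.exp (7 * (Real.pi : ℂ) * Complex.I / 5) * hc - he

lemma R_braid : R1 * R2 * R1 = R2 * R1 * R2 := by
  have ha : ((phi⁻¹ : ℝ) : ℂ) ^ 2 + ((phi⁻¹ : ℝ) : ℂ) = 1 := by exact_mod_cast phi_inv_sq
  have hb : ((phi ^ (-(1 : ℝ) / 2) : ℝ) : ℂ) ^ 2 = ((phi⁻¹ : ℝ) : ℂ) := by
    exact_mod_cast phi_rpow_sq
  have hw := exp_quadratic
  unfold R2 R1 Fm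
  generalize ((phi⁻¹ : ℝ) : ℂ) = a at *
  generalize ((phi ^ (-(1 : ℝ) / 2) : ℝ) : ℂ) = b at *
  generalize Complex.exp (7 * (Real.pi : ℂ) * Complex.I / 5) = w at *
  generalize Complex.exp (-4 * (Real.pi : ℂ) * Complex.I / 5) = s
  simp only [Matrix.smul_mul, Matrix.mul_smul]
  congr 3
  ext i j
  fin_cases i <;> fin_cases j <;> simp [Matrix.mul_apply, Fin.sum_univ_two] <;> grind

lemma kron_mul (A B C D : Matrix (Fin 2) (Fin 2) ℂ) :
    kron A B * kron C D = kron (A * C) (B * D) := by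
  ext i j
  simp only [kron, Matrix.mul_apply, Matrix.of_apply, Fin.sum_univ_four, Fin.sum_univ_two]
  simp
  ring

lemma oplus_mul (s t : ℂ) (M N : Matrix (Fin 4) (Fin 4) ℂ) :
    oplus s M * oplus t N = oplus (s * t) (M * N) := by
  simp only [oplus, Matrix.reindex_apply, Matrix.submatrix_mul_equiv, Matrix.fromBlocks_multiply]
  simp

/-- Braid relations for the 5-dimensional Fibonacci representation of `B₆`, away from the
middle strand: `σ₁σ₂σ₁ = σ₂σ₁σ₂`, `σ₄σ₅σ₄ = σ₅σ₄σ₅`, and `σᵢσⱼ = σⱼσᵢ` for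
`i ∈ {1,2}`, `j ∈ {4,5}`. -/
theorem fibonacci_B6_braid_relations :
    σ1 * σ2 * σ1 = σ2 * σ1 * σ2 ∧
    σ4 * σ5 * σ4 = σ5 * σ4 * σ5 ∧
    σ1 * σ4 = σ4 * σ1 ∧
    σ1 * σ5 = σ5 * σ1 ∧
    σ2 * σ4 = σ4 * σ2 ∧
    σ2 * σ5 = σ5 * σ2 := by
  simp only [σ1, σ2, σ4, σ5, Matrix.smul_mul, Matrix.mul_smul, oplus_mul, kron_mul, mul_one,
    one_mul, R_braid, and_self]
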